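/- For every integer q ≥ 1, every deterministic OBDD (with an arbitrary variable order) that represents the partial function ⊕ord(EQ_q) has width at least 2^q. Here ⊕ord is applied to EQ_q viewed as a function of 2q variables, so ⊕ord(EQ_q) is a partial function of n = 2q(⌈log₂ 2q⌉+1) variables. -/

import Mathlib

set_option maxHeartbeats 1000000
/-- `binVal l a = Σ_{j=1}^l a_j 2^{l-j}` (a₁ is the most significant bit). -/
def binVal (l : ℕ) (a : Fin l → Bool) : ℕ :=
  ∑ j : Fin l, if a j then 2 ^ (l - 1 - (j : ℕ)) else 0
/-- A deterministic OBDD of width `w` over `n` Boolean variables. -/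
structure OBDD (n w : ℕ) where
  ord : Equiv.Perm (Fin n)
  tr : Fin n → Fin w → Bool → Fin w
  start : Fin w
  acc : Finset (Fin w)

namespace OBDD

def final {n w : ℕ} (M : OBDD n w) (x : Fin n → Bool) : Fin w :=
  (List.finRange n).foldl (fun s i => M.tr i s (x (M.ord i))) M.start

def Accepts {n w : ℕ} (M : OBDD n w) (x : Fin n → Bool) : Prop :=
  M.final x ∈ M.acc

def Represents {n w : ℕ} (M : OBDD n w) (f : (Fin n → Bool) → Bool) : Prop :=
  ∀ x, M.Accepts x ↔ f x = true

def RepresentsPartial {n w : ℕ} (M : OBDD n w) (F : (Fin n → Bool) → Option Bool) : Prop :=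
  ∀ x b, F x = some b → (M.Accepts x ↔ b = true)

/-- The OBDD obtained by reordering: order `π`, transitions `tr' i = tr (ord⁻¹ (π i))`. -/
def reorder {n w : ℕ} (M : OBDD n w) (π : Equiv.Perm (Fin n)) : OBDD n w :=
  ⟨π, fun i => M.tr (M.ord.symm (π i)), M.start, M.acc⟩

/-- Every reordering represents the same function as `M`. -/
def Commutative {n w : ℕ} (M : OBDD n w) : Prop :=
  ∀ (π : Equiv.Perm (Fin n)) (x : Fin n → Bool),
    (M.reorder π).Accepts x ↔ M.Accepts x

end OBDD
lemma zIdx {q l : ℕ} (i : Fin q) (j : Fin l) : (i : ℕ) * l + (j : ℕ) < q * (l + 1) :=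
  calc (i : ℕ) * l + (j : ℕ) < (i : ℕ) * l + l := Nat.add_lt_add_left j.isLt _
    _ = ((i : ℕ) + 1) * l := by ring
    _ ≤ q * l := Nat.mul_le_mul i.isLt (Nat.le_refl l)
    _ ≤ q * (l + 1) := Nat.mul_le_mul (Nat.le_refl q) (Nat.le_succ l)

lemma yIdx {q l : ℕ} (i : Fin q) : q * l + (i : ℕ) < q * (l + 1) :=
  calc q * l + (i : ℕ) < q * l + q := Nat.add_lt_add_left i.isLt _
    _ = q * (l + 1) := by ring

/-- The bit `z_{i,j}` of an input to the reordered function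
(layout: `z_{1,1},…,z_{q,l}, y_1,…,y_q`). -/
def zOf (q l : ℕ) (x : Fin (q * (l + 1)) → Bool) (i : Fin q) (j : Fin l) : Bool :=
  x ⟨(i : ℕ) * l + (j : ℕ), zIdx i j⟩

/-- The value bit `y_i` of an input to the reordered function. -/
def yOf (q l : ℕ) (x : Fin (q * (l + 1)) → Bool) (i : Fin q) : Bool :=
  x ⟨q * l + (i : ℕ), yIdx i⟩

/-- `z_{1,j} ⊕ ⋯ ⊕ z_{i,j}`. -/
def xorZ (q l : ℕ) (x : Fin (q * (l + 1)) → Bool) (i : Fin q) (j : Fin l) : Bool :=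
  decide ((Finset.univ.filter (fun i' : Fin q => i' ≤ i ∧ zOf q l x i' j = true)).card % 2 = 1)

/-- `θ(i) − 1` for the plain reordering. -/
def addrOrd (q l : ℕ) (x : Fin (q * (l + 1)) → Bool) (i : Fin q) : ℕ :=
  binVal l (zOf q l x i)

/-- `θ(i) − 1` for the xor-reordering. -/
def addrXor (q l : ℕ) (x : Fin (q * (l + 1)) → Bool) (i : Fin q) : ℕ :=
  binVal l (xorZ q l x i)

/-- The partial reordered function: defined exactly when the addresses form a
permutation of `{1,…,q}`; then position `j` of `f`'s argument is `y_{θ⁻¹(j)}`. -/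
noncomputable def ordPartial (q l : ℕ) (f : (Fin q → Bool) → Bool)
    (addr : (Fin (q * (l + 1)) → Bool) → Fin q → ℕ) :
    (Fin (q * (l + 1)) → Bool) → Option Bool := fun x =>
  if h : ∃ σ : Equiv.Perm (Fin q), ∀ i, addr x i = (σ i : ℕ) then
    some (f fun j => yOf q l x (h.choose.symm j))
  else none

/-- The partial function `ord(f)`. -/
noncomputable def ordF (q : ℕ) (f : (Fin q → Bool) → Bool) :
    (Fin (q * (Nat.clog 2 q + 1)) → Bool) → Option Bool :=
  ordPartial q (Nat.clog 2 q) f (addrOrd q (Nat.clog 2 q))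

/-- The partial function `⊕ord(f)`. -/
noncomputable def xorOrdF (q : ℕ) (f : (Fin q → Bool) → Bool) :
    (Fin (q * (Nat.clog 2 q + 1)) → Bool) → Option Bool :=
  ordPartial q (Nat.clog 2 q) f (addrXor q (Nat.clog 2 q))
/-- The equality function `EQ_q` on `2q` variables. -/
def EQF (q : ℕ) : (Fin (2 * q) → Bool) → Bool := fun x =>
  decide (∀ i : Fin q,
    x ⟨(i : ℕ), by have := i.isLt; omega⟩ = x ⟨q + (i : ℕ), by have := i.isLt; omega⟩)

/-!
The number of subfunctions of `f` obtained by fixing its first `k` variables bounds from below the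
width of every OBDD for `⊕ord(f)`, whatever its variable order: since the address bits `z` can
encode any permutation, they may be fixed so that the `y`-variables, listed in the order in which
the OBDD reads them, are the arguments of `f` in their natural order. The states reached after the
first `k` of them have been read then separate the subfunctions of `f`. For `EQ_q` and `k = q` the
`2 ^ q` assignments to the first half give pairwise distinct subfunctions.
-/

section Subfunctions

variable {ι κ α β γ δ : Type*}

/-- The subfunctions of `f` obtained by fixing the variables in `S`. A subfunction still takes a
full assignment as argument, of which it ignores the values on `S`. -/
def subfunctions (f : (ι → α) → β) (S : Set ι) [∀ i, Decidable (i ∈ S)] : Set ((ι → α) → β) :=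
  Set.range fun a b => f (S.piecewise a b)

lemma encard_subfunctions_comp_le (g : (κ → γ) → δ) (φ : δ → β) (e : (ι → α) → κ → γ)
    {S : Set ι} [∀ i, Decidable (i ∈ S)] {T : Set κ} [∀ j, Decidable (j ∈ T)]
    (he : ∀ a b, e (S.piecewise a b) = T.piecewise (e a) (e b)) :
    (subfunctions (φ ∘ g ∘ e) S).encard ≤ (subfunctions g T).encard := by
  suffices hsub : subfunctions (φ ∘ g ∘ e) S ⊆ (φ ∘ · ∘ e) '' subfunctions g T from
    (Set.encard_le_encard hsub).trans (Set.encard_image_le _ _)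
  rintro _ ⟨a, rfl⟩
  refine ⟨_, ⟨e a, rfl⟩, ?_⟩
  ext b
  simp only [Function.comp_apply, he]

lemma card_le_encard_subfunctions (f : (ι → α) → β) (S : Set ι) [∀ i, Decidable (i ∈ S)]
    (A : κ → ι → α)
    (hA : ∀ u v, f (S.piecewise (A u) (A v)) = f (S.piecewise (A v) (A v)) → u = v) :
    ENat.card κ ≤ (subfunctions f S).encard := by
  have hinj : Function.Injective fun u b => f (S.piecewise (A u) b) :=
    fun u v huv => hA u v (congrFun huv (A v))
  exact hinj.encard_range.trans <|
    Set.encard_le_encard <| Set.range_subset_iff.2 fun u => ⟨A u, rfl⟩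

lemma encard_subfunctions_le_card {f : (ι → α) → β} {S : Set ι} [∀ i, Decidable (i ∈ S)]
    (before : (ι → α) → γ) (after : γ → (ι → α) → β)
    (hf : ∀ a b, f (S.piecewise a b) = after (before a) b) :
    (subfunctions f S).encard ≤ ENat.card γ := by
  have hsub : subfunctions f S ⊆ after '' Set.univ := by
    rintro _ ⟨a, rfl⟩
    exact ⟨before a, Set.mem_univ _, (funext (hf a)).symm⟩
  calc (subfunctions f S).encard ≤ (after '' Set.univ).encard := Set.encard_le_encard hsub
    _ ≤ (Set.univ : Set γ).encard := Set.encard_image_le _ _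
    _ = ENat.card γ := Set.encard_univ γ

end Subfunctions

lemma OBDD.encard_subfunctions_final_le {n w : ℕ} (M : OBDD n w) (t : ℕ) :
    (subfunctions M.final {j | (M.ord.symm j : ℕ) < t}).encard ≤ w := by
  let S : Set (Fin n) := {j | (M.ord.symm j : ℕ) < t}
  let step (x : Fin n → Bool) (s : Fin w) (i : Fin n) : Fin w := M.tr i s (x (M.ord i))
  have step_eq {x x' : Fin n → Bool} {s : Fin w} {i : Fin n} (h : x (M.ord i) = x' (M.ord i)) :
      step x s i = step x' s i := congrArg (M.tr i s) h
  let before (a : Fin n → Bool) : Fin w := ((List.finRange n).take t).foldl (step a) M.start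
  let after (s : Fin w) (b : Fin n → Bool) : Fin w := ((List.finRange n).drop t).foldl (step b) s
  have final_piecewise (a b : Fin n → Bool) :
      M.final (S.piecewise a b) = after (before a) b := by
    have hbefore : before (S.piecewise a b) = before a := by
      refine List.foldl_ext _ _ _ fun s i hi => step_eq (Set.piecewise_eq_of_mem _ _ _ ?_)
      obtain ⟨k, hk, rfl⟩ := List.mem_take_iff_getElem.1 hi
      simpa [S] using hk.trans_le (min_le_left _ _)
    have hafter (s : Fin w) : after s (S.piecewise a b) = after s b := by
      refine List.foldl_ext _ _ _ fun s i hi => step_eq (Set.piecewise_eq_of_notMem _ _ _ ?_)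
      obtain ⟨k, hk, rfl⟩ := List.mem_drop_iff_getElem.1 hi
      simp [S]
    calc M.final (S.piecewise a b)
        = after (before (S.piecewise a b)) (S.piecewise a b) := by
          simp only [after, before, ← List.foldl_append, List.take_append_drop]
          rfl
      _ = after (before a) b := by rw [hbefore, hafter]
  simpa using encard_subfunctions_le_card before after final_piecewise

lemma exists_binVal_eq {l m : ℕ} (hm : m < 2 ^ l) : ∃ a : Fin l → Bool, binVal l a = m := by
  let d : Fin l → Fin 2 := finFunctionFinEquiv.symm ⟨m, hm⟩
  refine ⟨fun j => d j.rev = 1, ?_⟩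
  calc binVal l (fun j => d j.rev = 1) = ∑ j : Fin l, (d j.rev : ℕ) * 2 ^ (j.rev : ℕ) := by
        refine Finset.sum_congr rfl fun j _ => ?_
        rw [Fin.val_rev, Nat.sub_sub, add_comm 1]
        obtain h | h : d j.rev = 0 ∨ d j.rev = 1 := by omega
        all_goals simp [h]
    _ = ∑ j : Fin l, (d j : ℕ) * 2 ^ (j : ℕ) :=
        Equiv.sum_comp Fin.revPerm fun j => (d j : ℕ) * 2 ^ (j : ℕ)
    _ = m := by rw [← finFunctionFinEquiv_apply, Equiv.apply_symm_apply]

lemma odd_count_ne_succ_iff (c : ℕ → Bool) (n : ℕ) :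
    Odd (Nat.count (fun k => c k ≠ c (k + 1)) n) ↔ c 0 ≠ c n := by
  induction n with
  | zero => simp
  | succ n ih =>
    rw [Nat.count_succ, Nat.odd_add, ih]
    cases c 0 <;> cases c n <;> cases c (n + 1) <;> simp

lemma card_filter_le_and_eq_count {n : ℕ} (i : Fin n) (p : ℕ → Prop) [DecidablePred p] :
    (Finset.univ.filter fun k : Fin n => k ≤ i ∧ p k).card = Nat.count p (i + 1) := by
  rw [Nat.count_eq_card_filter_range, ← Finset.card_map Fin.valEmbedding]
  congr 1
  ext k
  simp only [Finset.mem_map, Finset.mem_filter, Finset.mem_univ, true_and, Fin.valEmbedding_apply,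
    Finset.mem_range, Nat.lt_succ_iff]
  constructor
  · rintro ⟨j, ⟨hj, hp⟩, rfl⟩
    exact ⟨hj, hp⟩
  · rintro ⟨hk, hp⟩
    exact ⟨⟨k, hk.trans_lt i.isLt⟩, ⟨hk, hp⟩, rfl⟩

lemma exists_odd_card_filter_le_iff {n : ℕ} (d : Fin n → Bool) :
    ∃ b : Fin n → Bool, ∀ i,
      Odd (Finset.univ.filter fun k : Fin n => k ≤ i ∧ b k = true).card ↔ d i = true := by
  let c : ℕ → Bool
    | 0 => false
    | k + 1 => if h : k < n then d ⟨k, h⟩ else false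
  refine ⟨fun k => decide (c k ≠ c (k + 1)), fun i => ?_⟩
  simp only [decide_eq_true_eq]
  rw [card_filter_le_and_eq_count i fun k => c k ≠ c (k + 1), odd_count_ne_succ_iff]
  simp [c]

/-- The position of each variable of `⊕ord(f)`: `z_{i,j}` is `Sum.inl (i, j)` and `y_i` is
`Sum.inr i`. -/
def varEquiv (Q l : ℕ) : (Fin Q × Fin l) ⊕ Fin Q ≃ Fin (Q * (l + 1)) :=
  (Equiv.sumCongr finProdFinEquiv (Equiv.refl _)).trans <|
    finSumFinEquiv.trans (finCongr (Nat.mul_succ Q l).symm)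

lemma val_varEquiv_inl {Q l : ℕ} (i : Fin Q) (j : Fin l) :
    (varEquiv Q l (Sum.inl (i, j)) : ℕ) = j + l * i := by
  change (finSumFinEquiv (Sum.inl (finProdFinEquiv (i, j))) : ℕ) = j + l * i
  rw [finSumFinEquiv_apply_left, Fin.val_castAdd, finProdFinEquiv_apply_val]

lemma val_varEquiv_inr {Q l : ℕ} (i : Fin Q) : (varEquiv Q l (Sum.inr i) : ℕ) = Q * l + i := by
  change (finSumFinEquiv (Sum.inr i) : ℕ) = Q * l + i
  rw [finSumFinEquiv_apply_right, Fin.val_natAdd]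

/-- The input of `⊕ord(f)` with address bits `z` and value bits `y`. -/
def mkInput {Q l : ℕ} (z : Fin Q → Fin l → Bool) (y : Fin Q → Bool) : Fin (Q * (l + 1)) → Bool :=
  Sum.elim (Function.uncurry z) y ∘ (varEquiv Q l).symm

section Inputs

variable {Q l : ℕ} (z : Fin Q → Fin l → Bool) (y : Fin Q → Bool)

lemma mkInput_varEquiv (s : (Fin Q × Fin l) ⊕ Fin Q) :
    mkInput z y (varEquiv Q l s) = Sum.elim (Function.uncurry z) y s := by
  rw [mkInput, Function.comp_apply, Equiv.symm_apply_apply]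

lemma zOf_mkInput : zOf Q l (mkInput z y) = z := by
  ext i j
  have hidx : (⟨(i : ℕ) * l + j, zIdx i j⟩ : Fin (Q * (l + 1))) = varEquiv Q l (Sum.inl (i, j)) :=
    Fin.ext <| by
      simp only [val_varEquiv_inl]
      ring
  rw [zOf, hidx, mkInput_varEquiv, Sum.elim_inl, Function.uncurry_apply_pair]

lemma yOf_mkInput : yOf Q l (mkInput z y) = y := by
  ext i
  have hidx : (⟨Q * l + (i : ℕ), yIdx i⟩ : Fin (Q * (l + 1))) = varEquiv Q l (Sum.inr i) :=
    Fin.ext <| by simp only [val_varEquiv_inr]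
  rw [yOf, hidx, mkInput_varEquiv, Sum.elim_inr]

end Inputs

lemma exists_xorZ_mkInput_eq {Q l : ℕ} (c : Fin Q → Fin l → Bool) :
    ∃ z : Fin Q → Fin l → Bool, ∀ y, xorZ Q l (mkInput z y) = c := by
  choose b hb using fun j => exists_odd_card_filter_le_iff fun i => c i j
  refine ⟨fun i j => b j i, fun y => ?_⟩
  ext i j
  simp only [xorZ, zOf_mkInput, ← Nat.odd_iff, hb, Bool.decide_eq_true]

lemma exists_addrXor_mkInput_eq {Q l : ℕ} (hl : Q ≤ 2 ^ l) (σ : Equiv.Perm (Fin Q)) :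
    ∃ z : Fin Q → Fin l → Bool, ∀ y i, addrXor Q l (mkInput z y) i = (σ i : ℕ) := by
  choose c hc using fun i => exists_binVal_eq ((σ i).isLt.trans_le hl)
  obtain ⟨z, hz⟩ := exists_xorZ_mkInput_eq c
  exact ⟨z, fun y i => by rw [addrXor, hz, hc]⟩

lemma ordPartial_eq_some {Q l : ℕ} {f : (Fin Q → Bool) → Bool}
    {addr : (Fin (Q * (l + 1)) → Bool) → Fin Q → ℕ} {x : Fin (Q * (l + 1)) → Bool}
    {σ : Equiv.Perm (Fin Q)} (hσ : ∀ i, addr x i = (σ i : ℕ)) :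
    ordPartial Q l f addr x = some (f (yOf Q l x ∘ σ.symm)) := by
  have hex : ∃ σ : Equiv.Perm (Fin Q), ∀ i, addr x i = (σ i : ℕ) := ⟨σ, hσ⟩
  have huniq : hex.choose = σ := by
    ext i
    rw [← hex.choose_spec i, hσ i]
  rw [ordPartial, dif_pos hex, huniq]
  rfl

lemma exists_perm_forall_lt_iff {Q n : ℕ} {r : Fin Q → Fin n} (hr : Function.Injective r) (k : ℕ) :
    ∃ (σ : Equiv.Perm (Fin Q)) (t : ℕ), ∀ i, (σ i : ℕ) < k ↔ (r i : ℕ) < t := by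
  have hmono : StrictMono (r ∘ Tuple.sort r) :=
    (Tuple.monotone_sort r).strictMono_of_injective (hr.comp (Tuple.sort r).injective)
  refine ⟨(Tuple.sort r).symm, if hk : k < Q then r (Tuple.sort r ⟨k, hk⟩) else n, fun i => ?_⟩
  split_ifs with hk
  · have hlt := hmono.lt_iff_lt (a := (Tuple.sort r).symm i) (b := ⟨k, hk⟩)
    rw [Function.comp_apply, Equiv.apply_symm_apply] at hlt
    exact hlt.symm
  · simp only [(Fin.isLt _).trans_le (not_lt.1 hk), Fin.isLt]

lemma mkInput_piecewise_comp {Q l : ℕ} (z : Fin Q → Fin l → Bool) {σ : Fin Q → Fin Q}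
    {S : Set (Fin Q)} [∀ i, Decidable (i ∈ S)]
    {T : Set (Fin (Q * (l + 1)))} [∀ j, Decidable (j ∈ T)]
    (hST : ∀ i, σ i ∈ S ↔ varEquiv Q l (Sum.inr i) ∈ T) (a b : Fin Q → Bool) :
    mkInput z (S.piecewise a b ∘ σ) = T.piecewise (mkInput z (a ∘ σ)) (mkInput z (b ∘ σ)) := by
  ext j
  obtain ⟨p | i, rfl⟩ := (varEquiv Q l).surjective j
  · simp [Set.piecewise, mkInput_varEquiv]
  · simp [Set.piecewise, mkInput_varEquiv, hST]

lemma OBDD.RepresentsPartial.encard_subfunctions_le_width {Q l w : ℕ}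
    {f : (Fin Q → Bool) → Bool} {addr : (Fin (Q * (l + 1)) → Bool) → Fin Q → ℕ}
    {M : OBDD (Q * (l + 1)) w} (hM : M.RepresentsPartial (ordPartial Q l f addr))
    (haddr : ∀ σ : Equiv.Perm (Fin Q), ∃ z : Fin Q → Fin l → Bool, ∀ y i,
      addr (mkInput z y) i = (σ i : ℕ)) (k : ℕ) :
    (subfunctions f {i | (i : ℕ) < k}).encard ≤ w := by
  have hread : Function.Injective fun i => M.ord.symm (varEquiv Q l (Sum.inr i)) :=
    M.ord.symm.injective.comp ((varEquiv Q l).injective.comp Sum.inr_injective)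
  obtain ⟨σ, t, hσ⟩ := exists_perm_forall_lt_iff hread k
  obtain ⟨z, hz⟩ := haddr σ
  have hf : f = (fun s => decide (s ∈ M.acc)) ∘ M.final ∘ fun y => mkInput z (y ∘ σ) := by
    funext y
    rw [Bool.eq_iff_iff, Function.comp_apply, decide_eq_true_iff]
    have hacc := hM _ _ (ordPartial_eq_some (hz (y ∘ σ)))
    rw [yOf_mkInput, Function.comp_assoc, Equiv.self_comp_symm, Function.comp_id] at hacc
    exact hacc.symm
  have hcut := mkInput_piecewise_comp z (S := {i | (i : ℕ) < k})
    (T := {j | (M.ord.symm j : ℕ) < t}) hσ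
  rw [hf]
  exact (encard_subfunctions_comp_le M.final _ _ hcut).trans (M.encard_subfunctions_final_le t)

/-- The assignment to the `2q` arguments of `EQ_q` whose two halves are both `u`. -/
def double {q : ℕ} (u : Fin q → Bool) : Fin (2 * q) → Bool :=
  Fin.append u u ∘ finCongr (two_mul q)

lemma EQF_piecewise_double {q : ℕ} (u v : Fin q → Bool) :
    EQF q ({i : Fin (2 * q) | (i : ℕ) < q}.piecewise (double u) (double v)) = decide (u = v) := by
  have hfst (i : Fin q) (h : (i : ℕ) < 2 * q) : double u ⟨i, h⟩ = u i :=
    Fin.append_left u u i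
  have hsnd (i : Fin q) (h : q + (i : ℕ) < 2 * q) : double v ⟨q + i, h⟩ = v i :=
    Fin.append_right v v i
  simp [EQF, Set.piecewise, hfst, hsnd, funext_iff]

lemma two_pow_le_encard_subfunctions_EQF (q : ℕ) :
    2 ^ q ≤ (subfunctions (EQF q) {i | (i : ℕ) < q}).encard := by
  have hfool := card_le_encard_subfunctions (EQF q) {i | (i : ℕ) < q} double fun u v huv => by
    rw [EQF_piecewise_double, EQF_piecewise_double] at huv
    simpa using huv
  simpa using hfool

/-- every deterministic OBDD representing `⊕ord(EQ_q)` has width `≥ 2^q`. -/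
theorem stmt7 (q : ℕ) (hq : 1 ≤ q) (w : ℕ)
    (M : OBDD (2 * q * (Nat.clog 2 (2 * q) + 1)) w)
    (h : M.RepresentsPartial (xorOrdF (2 * q) (EQF q))) : 2 ^ q ≤ w := by
  have hwidth : (2 ^ q : ℕ∞) ≤ w := calc
    (2 ^ q : ℕ∞) ≤ (subfunctions (EQF q) {i | (i : ℕ) < q}).encard :=
      two_pow_le_encard_subfunctions_EQF q
    _ ≤ w := h.encard_subfunctions_le_width
      (exists_addrXor_mkInput_eq (Nat.le_pow_clog one_lt_two _)) q
  exact_mod_cast hwidth
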